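/- Let (Γ, ρ) be a compact metric space and let 𝒮_a[τ_D, N₀] be the set of piecewise constant, right-continuous signals σ: ℝ₊ → Γ with average dwell-time τ_D > 0 and chatter bound N₀ ∈ ℕ. Then 𝒮_a[τ_D, N₀] is compact with respect to the metric d(u,v) = Σ_{n=1}^∞ 2^{-n} ∫₀ⁿ ρ(u(s), v(s)) ds. -/

import Mathlib

open Filter Set MeasureTheory

/-- The switching times (points of left-discontinuity) of a signal `σ` on `(0,∞)`. -/
def SwitchTimes {Γ : Type*} (σ : ℝ → Γ) : Set ℝ :=
  {s | 0 < s ∧ ∀ ε > 0, ∃ u, s - ε < u ∧ u < s ∧ σ u ≠ σ s}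

/-- `σ` is locally constant from the right at every time (right-continuity and
piecewise constancy from the right). -/
def RightLocConst {Γ : Type*} (σ : ℝ → Γ) : Prop :=
  ∀ s : ℝ, ∃ ε > 0, ∀ u : ℝ, s ≤ u → u < s + ε → σ u = σ s

/-- `σ` has average dwell-time `τD` and chatter bound `N₀`: the number of switching
times in any open interval `(τ₁,τ₂) ⊆ ℝ₊` is at most `N₀ + (τ₂ - τ₁)/τD`. -/
def HasADT {Γ : Type*} (σ : ℝ → Γ) (τD : ℝ) (N₀ : ℕ) : Prop :=
  ∀ τ₁ τ₂ : ℝ, 0 ≤ τ₁ → τ₁ < τ₂ →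
    (Nat.card ↥(SwitchTimes σ ∩ Set.Ioo τ₁ τ₂) : ℝ) ≤ (N₀ : ℝ) + (τ₂ - τ₁) / τD

/-- A switching signal with average dwell-time `τD > 0` and chatter bound `N₀`:
piecewise constant, right-continuous, with the average dwell-time property. -/
def IsSwitchingSignal {Γ : Type*} (σ : ℝ → Γ) (τD : ℝ) (N₀ : ℕ) : Prop :=
  RightLocConst σ ∧ HasADT σ τD N₀

theorem aux_const {Γ : Type*} (g : ℝ → Γ) (a b : ℝ)
    (h : ∀ s ∈ Ioo a b, ∃ ε > 0, ∀ u, s - ε < u → u < s + ε → g u = g s) :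
    ∀ x ∈ Ioo a b, ∀ y ∈ Ioo a b, g x = g y := by
  letI : TopologicalSpace Γ := ⊥
  haveI : DiscreteTopology Γ := ⟨rfl⟩
  intro x hx y hy
  refine (isPreconnected_Ioo (a := a) (b := b)).constant (f := g) ?_ hx hy
  intro s hs
  obtain ⟨ε, hε, he⟩ := h s hs
  apply ContinuousAt.continuousWithinAt
  have : g =ᶠ[nhds s] fun _ => g s := by
    filter_upwards [Ioo_mem_nhds (show s - ε < s by linarith) (show s < s + ε by linarith)] with u hu
    exact he u hu.1 hu.2
  exact (continuousAt_const).congr this.symm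

theorem aux_const' {Γ : Type*} (g : ℝ → Γ) (hg : RightLocConst g) (a b : ℝ) (ha : 0 ≤ a)
    (h : ¬ (SwitchTimes g ∩ Ioo a b).Nonempty) :
    ∀ x ∈ Ioo a b, ∀ y ∈ Ioo a b, g x = g y := by
  apply aux_const
  intro s hs
  have h1 : s ∉ SwitchTimes g := fun h2 => h ⟨s, h2, hs⟩
  have h0 : 0 < s := lt_of_le_of_lt ha hs.1
  simp only [SwitchTimes, mem_setOf_eq, not_and] at h1
  have h2 := h1 h0
  push Not at h2
  obtain ⟨e1, he1, h3⟩ := h2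
  obtain ⟨e2, he2, h4⟩ := hg s
  refine ⟨min e1 e2, lt_min he1 he2, fun u hu1 hu2 => ?_⟩
  have := min_le_left e1 e2
  have := min_le_right e1 e2
  rcases lt_or_ge u s with h | h
  · exact h3 u (by linarith) h
  · exact h4 u h (by linarith)

theorem aux_fin {Γ : Type*} (g : ℝ → Γ) (τD : ℝ) (hτ : 0 < τD) (N₀ : ℕ)
    (hg : IsSwitchingSignal g τD N₀) (T : ℝ) : (SwitchTimes g ∩ Ioo 0 T).Finite := by
  by_contra hT
  obtain ⟨h1, h2⟩ := hg
  set A : Set ℝ := {t | 0 ≤ t ∧ (SwitchTimes g ∩ Ioo 0 t).Finite} with hA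
  have h0 : (0:ℝ) ∈ A := by simp [hA]
  have hb : ∀ t ∈ A, t ≤ T := by
    intro t ht
    by_contra hlt
    push Not at hlt
    exact hT (ht.2.subset (inter_subset_inter_right _ (Ioo_subset_Ioo_right hlt.le)))
  have hbdd : BddAbove A := ⟨T, hb⟩
  set t := sSup A with ht
  have ht0 : 0 ≤ t := le_csSup hbdd h0
  obtain ⟨ε, hε, he⟩ := h1 t
  have hfin : (SwitchTimes g ∩ Ioo 0 t).Finite := by
    by_contra hinf
    obtain ⟨M, hM⟩ := exists_nat_gt ((N₀:ℝ) + t / τD)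
    obtain ⟨F, hF, hFc⟩ := Set.Infinite.exists_subset_card_eq hinf M
    have : ∃ a ∈ A, ∀ x ∈ F, x < a := by
      rcases F.eq_empty_or_nonempty with h | h
      · exact ⟨0, h0, by simp [h]⟩
      · have hm := (hF (F.max'_mem h)).2.2
        obtain ⟨a, ha, hlt⟩ := exists_lt_of_lt_csSup ⟨0, h0⟩ hm
        exact ⟨a, ha, fun x hx => lt_of_le_of_lt (F.le_max' x hx) hlt⟩
    obtain ⟨a, ha, hlt⟩ := this
    have hat : a ≤ t := le_csSup hbdd ha
    rcases eq_or_lt_of_le ha.1 with h | h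
    · have hFe : F = ∅ := by
        apply Finset.eq_empty_of_forall_notMem
        intro x hx
        have := hlt x hx
        have := (hF hx).2.1
        linarith
      have : M = 0 := by rw [← hFc, hFe]; rfl
      subst this
      have : 0 ≤ t / τD := by positivity
      have : (0:ℝ) ≤ N₀ := by positivity
      norm_num at hM
      linarith
    · have h3 := h2 0 a le_rfl h
      have h4 : (F : Set ℝ) ⊆ SwitchTimes g ∩ Ioo 0 a :=
        fun x hx => ⟨(hF hx).1, (hF hx).2.1, hlt x hx⟩
      have h5 := Set.ncard_le_ncard h4 ha.2
      rw [Set.ncard_coe_finset, hFc, ← Nat.card_coe_set_eq] at h5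
      have h6 : (M:ℝ) ≤ (Nat.card ↥(SwitchTimes g ∩ Ioo 0 a) : ℝ) := by exact_mod_cast h5
      have h7 : (a - 0) / τD ≤ t / τD := by
        apply div_le_div_of_nonneg_right _ hτ.le
        linarith
      linarith
  have : t + ε ∈ A := by
    refine ⟨by linarith, (hfin.union (finite_singleton t)).subset ?_⟩
    rintro x ⟨hx, hx0, hx1⟩
    rcases lt_trichotomy x t with h | h | h
    · exact Or.inl ⟨hx, hx0, h⟩
    · exact Or.inr h
    · exfalso
      obtain ⟨u, hu1, hu2, hu3⟩ := hx.2 (x - t) (by linarith)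
      exact hu3 ((he u (by linarith) (by linarith)).trans (he x h.le hx1).symm)
  have := le_csSup hbdd this
  linarith

theorem aux_meas (h : ℝ → ℝ) (hr : RightLocConst h) : Measurable h := by
  refine measurable_of_tendsto_metrizable
    (f := fun (n : ℕ) s => h (((⌊((n:ℝ) + 1) * s⌋ : ℝ) + 1) / ((n:ℝ) + 1))) ?_ ?_
  · intro n
    have h1 : Measurable (fun z : ℤ => h (((z : ℝ) + 1) / ((n:ℝ) + 1))) := measurable_from_top
    exact h1.comp (Int.measurable_floor.comp (measurable_const.mul measurable_id))
  · rw [tendsto_pi_nhds]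
    intro s
    obtain ⟨ε, hε, he⟩ := hr s
    obtain ⟨n0, hn0⟩ := exists_nat_one_div_lt hε
    apply tendsto_const_nhds.congr'
    filter_upwards [eventually_ge_atTop n0] with n hn
    symm
    have hnp : (0:ℝ) < (n:ℝ) + 1 := by positivity
    apply he
    · rw [le_div_iff₀ hnp]
      have := Int.lt_floor_add_one (((n:ℝ) + 1) * s)
      linarith
    · rw [div_lt_iff₀ hnp]
      have := Int.floor_le (((n:ℝ) + 1) * s)
      have h2 : 1 / ((n:ℝ)+1) < ε := lt_of_le_of_lt (Nat.one_div_le_one_div hn) hn0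
      rw [div_lt_iff₀ hnp] at h2
      linarith

theorem aux_sum {Γ : Type*} [MetricSpace Γ] [CompactSpace Γ]
    (σ : ℕ → ℝ → Γ) (hσ : ∀ k, RightLocConst (σ k)) (g : ℝ → Γ) (hg : RightLocConst g)
    (J : Set ℝ) (hJ : J.Countable)
    (hc : ∀ t, 0 < t → t ∉ J → Tendsto (fun k => σ k t) atTop (nhds (g t))) :
    Tendsto (fun l => ∑' k : ℕ, ((1:ℝ)/2) ^ (k + 1) *
          ∫ s in (0:ℝ)..((k : ℝ) + 1), dist (σ l s) (g s)) atTop (nhds 0) := by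
  set D := Metric.diam (univ : Set Γ)
  have hD : ∀ x y : Γ, dist x y ≤ D := fun x y =>
    Metric.dist_le_diam_of_mem isCompact_univ.isBounded (mem_univ _) (mem_univ _)
  have hI : ∀ k : ℕ, Tendsto (fun l => ∫ s in (0:ℝ)..((k : ℝ) + 1), dist (σ l s) (g s))
      atTop (nhds 0) := by
    intro k
    have h0 : (0:ℝ) = ∫ s in (0:ℝ)..((k : ℝ) + 1), (0:ℝ) := by simp
    conv => rhs; rw [h0]
    apply intervalIntegral.tendsto_integral_filter_of_dominated_convergence (fun _ => D)
    · refine Eventually.of_forall fun l => (aux_meas _ ?_).aestronglyMeasurable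
      intro s
      obtain ⟨e1, he1, h1⟩ := hσ l s
      obtain ⟨e2, he2, h2⟩ := hg s
      refine ⟨min e1 e2, lt_min he1 he2, fun u hu1 hu2 => ?_⟩
      have := min_le_left e1 e2
      have := min_le_right e1 e2
      simp only []
      rw [h1 u hu1 (by linarith), h2 u hu1 (by linarith)]
    · refine Eventually.of_forall fun l => Eventually.of_forall fun s _ => ?_
      rw [Real.norm_of_nonneg dist_nonneg]
      exact hD _ _
    · simp
    · have : ∀ᵐ s : ℝ, s ∉ J := hJ.ae_notMem _
      filter_upwards [this] with s hs hs2
      rw [uIoc_of_le (by positivity)] at hs2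
      exact tendsto_iff_dist_tendsto_zero.1 (hc s hs2.1 hs)
  have h0 : (0:ℝ) = ∑' k : ℕ, ((1:ℝ)/2) ^ (k + 1) * 0 := by simp
  conv => rhs; rw [h0]
  apply tendsto_tsum_of_dominated_convergence
    (bound := fun k : ℕ => ((1:ℝ)/2) ^ (k + 1) * (D * ((k:ℝ) + 1)))
  · have h1 := summable_pow_mul_geometric_of_norm_lt_one 1 (r := (1/2:ℝ)) (by norm_num)
    have h2 := summable_pow_mul_geometric_of_norm_lt_one 0 (r := (1/2:ℝ)) (by norm_num)
    have h3 := (h1.add h2).mul_left (D / 2)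
    refine h3.congr fun k => ?_
    ring
  · intro k
    exact (hI k).const_mul _
  · refine Eventually.of_forall fun l k => ?_
    rw [norm_mul, Real.norm_of_nonneg (by positivity : (0:ℝ) ≤ (1/2)^(k+1))]
    gcongr
    have := intervalIntegral.norm_integral_le_of_norm_le_const (a := 0) (b := (k:ℝ)+1) (C := D)
      (f := fun s => dist (σ l s) (g s)) (fun s _ => by
        rw [Real.norm_of_nonneg dist_nonneg]; exact hD _ _)
    rwa [sub_zero, abs_of_nonneg (by positivity)] at this

/-- for a compact metric space `Γ`, the set `𝒮_a[τD,N₀]` of switching signals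
with average dwell-time `τD > 0` and chatter bound `N₀` is compact for the metric
`d(u,v) = ∑_{n=1}^∞ 2⁻ⁿ ∫₀ⁿ ρ(u(s),v(s)) ds`, expressed here as sequential compactness:
every sequence in `𝒮_a[τD,N₀]` has a subsequence converging in this metric to a member
of `𝒮_a[τD,N₀]`. -/
theorem stmt4 {Γ : Type*} [MetricSpace Γ] [CompactSpace Γ]
    (τD : ℝ) (hτ : 0 < τD) (N₀ : ℕ)
    (σ : ℕ → ℝ → Γ) (hσ : ∀ k, IsSwitchingSignal (σ k) τD N₀) :
    ∃ φ : ℕ → ℕ, StrictMono φ ∧ ∃ σ' : ℝ → Γ, IsSwitchingSignal σ' τD N₀ ∧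
      Tendsto (fun l => ∑' k : ℕ, ((1:ℝ)/2) ^ (k + 1) *
          ∫ s in (0:ℝ)..((k : ℝ) + 1), dist (σ (φ l) s) (σ' s)) atTop (nhds 0) := by
  classical
  let x : ℕ → (ℚ → Γ) × (ℚ × ℚ → Bool) := fun k =>
    (fun q => σ k q, fun p => decide ((SwitchTimes (σ k) ∩ Ioo (p.1:ℝ) (p.2:ℝ)).Nonempty))
  obtain ⟨⟨L, B⟩, φ, hφ, hx⟩ := CompactSpace.tendsto_subseq x
  rw [Prod.tendsto_iff] at hx
  obtain ⟨hL, hB⟩ := hx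
  rw [tendsto_pi_nhds] at hL hB
  have hL' : ∀ q : ℚ, Tendsto (fun l => σ (φ l) q) atTop (nhds (L q)) := hL
  have hB' : ∀ p : ℚ × ℚ, ∀ᶠ l in atTop,
      decide ((SwitchTimes (σ (φ l)) ∩ Ioo (p.1:ℝ) (p.2:ℝ)).Nonempty) = B p := by
    intro p
    have := hB p
    rw [nhds_discrete, tendsto_pure] at this
    exact this
  have hBt : ∀ q r : ℚ, B (q, r) = true → ∀ᶠ l in atTop,
      (SwitchTimes (σ (φ l)) ∩ Ioo (q:ℝ) (r:ℝ)).Nonempty := by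
    intro q r h
    filter_upwards [hB' (q, r)] with l hl
    rw [h] at hl
    exact of_decide_eq_true hl
  have hBf : ∀ q r : ℚ, ¬ B (q, r) = true → ∀ᶠ l in atTop,
      ¬ (SwitchTimes (σ (φ l)) ∩ Ioo (q:ℝ) (r:ℝ)).Nonempty := by
    intro q r h
    filter_upwards [hB' (q, r)] with l hl
    rw [← hl] at h
    simpa using h
  set J : Set ℝ := {s | 0 < s ∧ ∀ q r : ℚ, (0:ℝ) ≤ q → (q:ℝ) < s → s < r → B (q, r) = true} with hJ
  -- counting
  have hcount : ∀ τ₁ τ₂ : ℝ, 0 ≤ τ₁ → τ₁ < τ₂ → ∀ F : Finset ℝ, (F : Set ℝ) ⊆ J ∩ Ioo τ₁ τ₂ →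
      (F.card : ℝ) ≤ (N₀ : ℝ) + (τ₂ - τ₁) / τD := by
    intro τ₁ τ₂ h1 h12 F hF
    have hsep : ∃ ε > 0, ∀ s ∈ F, ∀ t ∈ F, s ≠ t → 2 * ε ≤ |s - t| := by
      have hfin : (F.offDiag.image (fun p => |p.1 - p.2|)).Nonempty ∨
        ¬ (F.offDiag.image (fun p => |p.1 - p.2|)).Nonempty := em _
      rcases hfin with h | h
      · refine ⟨(F.offDiag.image (fun p => |p.1 - p.2|)).min' h / 2, ?_, ?_⟩
        · have := Finset.min'_mem _ h
          rw [Finset.mem_image] at this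
          obtain ⟨p, hp, hpe⟩ := this
          rw [← hpe]
          have := (Finset.mem_offDiag.1 hp).2.2
          have := abs_pos.2 (sub_ne_zero.2 this)
          linarith
        · intro s hs t ht hst
          have := Finset.min'_le (F.offDiag.image (fun p => |p.1 - p.2|)) (|s - t|)
            (Finset.mem_image.2 ⟨(s, t), Finset.mem_offDiag.2 ⟨hs, ht, hst⟩, rfl⟩)
          linarith
      · refine ⟨1, one_pos, fun s hs t ht hst => (h ?_).elim⟩
        exact ⟨_, Finset.mem_image.2 ⟨(s, t), Finset.mem_offDiag.2 ⟨hs, ht, hst⟩, rfl⟩⟩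
    obtain ⟨ε, hε, hsep⟩ := hsep
    have hev : ∀ s ∈ F, ∀ᶠ l in atTop, ∃ p, p ∈ SwitchTimes (σ (φ l)) ∩ Ioo τ₁ τ₂ ∧ |p - s| < ε := by
      intro s hs
      obtain ⟨hsJ, hs1, hs2⟩ := hF hs
      obtain ⟨q, hq1, hq2⟩ := exists_rat_btwn (max_lt hs1 (show s - ε < s by linarith))
      obtain ⟨r, hr1, hr2⟩ := exists_rat_btwn (lt_min hs2 (show s < s + ε by linarith))
      rw [max_lt_iff] at hq1
      rw [lt_min_iff] at hr2
      filter_upwards [hBt q r (hsJ.2 q r (by linarith) hq2 hr1)] with l hl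
      obtain ⟨p, hp, hpq, hpr⟩ := hl
      refine ⟨p, ⟨hp, by linarith, by linarith⟩, ?_⟩
      rw [abs_lt]
      constructor <;> linarith
    have hev2 := (Finset.eventually_all F).2 hev
    obtain ⟨l, hl⟩ := hev2.exists
    choose! p hp using hl
    have hfin : (SwitchTimes (σ (φ l)) ∩ Ioo τ₁ τ₂).Finite :=
      (aux_fin _ τD hτ N₀ (hσ (φ l)) τ₂).subset
        (inter_subset_inter_right _ (Ioo_subset_Ioo_left h1))
    have hinj : Set.InjOn p F := by
      intro s hs t ht hst
      by_contra hne
      have h3 := hsep s hs t ht hne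
      have h4 := (hp s hs).2
      have h5 := (hp t ht).2
      rw [hst] at h4
      have : |s - t| ≤ |p t - s| + |p t - t| := by
        rw [abs_sub_comm (p t) s]; exact abs_sub_le s (p t) t
      linarith
    have h6 : (F.image p : Set ℝ) ⊆ SwitchTimes (σ (φ l)) ∩ Ioo τ₁ τ₂ := by
      intro y hy
      simp only [Finset.coe_image, Set.mem_image, Finset.mem_coe] at hy
      obtain ⟨s, hs, rfl⟩ := hy
      exact (hp s hs).1
    have h7 := Set.ncard_le_ncard h6 hfin
    rw [Set.ncard_coe_finset, Finset.card_image_of_injOn hinj, ← Nat.card_coe_set_eq] at h7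
    have h8 : (F.card : ℝ) ≤ (Nat.card ↥(SwitchTimes (σ (φ l)) ∩ Ioo τ₁ τ₂) : ℝ) := by
      exact_mod_cast h7
    exact h8.trans ((hσ (φ l)).2 τ₁ τ₂ h1 h12)
  have hJfin : ∀ τ₁ τ₂ : ℝ, 0 ≤ τ₁ → τ₁ < τ₂ → (J ∩ Ioo τ₁ τ₂).Finite := by
    intro τ₁ τ₂ h1 h12
    by_contra hinf
    obtain ⟨M, hM⟩ := exists_nat_gt ((N₀:ℝ) + (τ₂ - τ₁) / τD)
    obtain ⟨F, hF, hFc⟩ := Set.Infinite.exists_subset_card_eq hinf M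
    have := hcount τ₁ τ₂ h1 h12 F hF
    rw [hFc] at this
    linarith
  have hJc : J.Countable := by
    have : J ⊆ ⋃ n : ℕ, J ∩ Ioo 0 ((n:ℝ) + 1) := by
      intro s hs
      obtain ⟨n, hn⟩ := exists_nat_gt s
      exact mem_iUnion.2 ⟨n, hs, hs.1, by linarith⟩
    exact (countable_iUnion fun n => (hJfin 0 _ le_rfl (by positivity)).countable).mono this
  -- local constancy off J
  have hloc : ∀ s, 0 < s → s ∉ J → ∃ ε > 0, ∃ v, ∀ u, s - ε < u → u < s + ε →
      0 < u ∧ u ∉ J ∧ Tendsto (fun l => σ (φ l) u) atTop (nhds v) := by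
    intro s hs0 hsJ
    have : ∃ q r : ℚ, (0:ℝ) ≤ q ∧ (q:ℝ) < s ∧ s < r ∧ ¬ B (q, r) = true := by
      by_contra hcon
      push Not at hcon
      exact hsJ ⟨hs0, hcon⟩
    obtain ⟨q, r, hq0, hqs, hsr, hb⟩ := this
    obtain ⟨m, hm1, hm2⟩ := exists_rat_btwn hqs
    refine ⟨min (s - q) (r - s), lt_min (by linarith) (by linarith), L m, fun u hu1 hu2 => ?_⟩
    have := min_le_left (s - (q:ℝ)) (r - s)
    have := min_le_right (s - (q:ℝ)) (r - s)
    have hqu : (q:ℝ) < u := by linarith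
    have hur : u < (r:ℝ) := by linarith
    refine ⟨by linarith, fun huJ => hb (huJ.2 q r hq0 hqu hur), ?_⟩
    refine (hL' m).congr' ?_
    filter_upwards [hBf q r hb] with l hl
    exact aux_const' _ (hσ (φ l)).1 q r hq0 hl m ⟨hm1, by linarith⟩ u ⟨hqu, hur⟩
  have hf : ∀ s, ∃ v, 0 < s → s ∉ J → Tendsto (fun l => σ (φ l) s) atTop (nhds v) := by
    intro s
    by_cases h : 0 < s ∧ s ∉ J
    · obtain ⟨ε, hε, v, hv⟩ := hloc s h.1 h.2
      exact ⟨v, fun _ _ => (hv s (by linarith) (by linarith)).2.2⟩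
    · exact ⟨σ 0 0, fun h1 h2 => (h ⟨h1, h2⟩).elim⟩
  choose f hf using hf
  have hfl : ∀ s, 0 < s → s ∉ J → ∃ ε > 0, ∀ u, s - ε < u → u < s + ε → f u = f s := by
    intro s hs0 hsJ
    obtain ⟨ε, hε, v, hv⟩ := hloc s hs0 hsJ
    have key : ∀ u, s - ε < u → u < s + ε → f u = v := by
      intro u h1 h2
      obtain ⟨h3, h4, h5⟩ := hv u h1 h2
      exact tendsto_nhds_unique (hf u h3 h4) h5
    exact ⟨ε, hε, fun u h1 h2 => (key u h1 h2).trans (key s (by linarith) (by linarith)).symm⟩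
  have hw : ∀ t : ℝ, ∃ v, 0 ≤ t → ∃ c > t, ∀ u ∈ Ioo t c, f u = v := by
    intro t
    by_cases ht : 0 ≤ t
    · have hfin := hJfin t (t + 1) ht (by linarith)
      have hnot : ∃ c > t, c ≤ t + 1 ∧ ∀ u ∈ Ioo t c, u ∉ J := by
        have hmem : (J ∩ Ioo t (t + 1))ᶜ ∈ nhds t :=
          hfin.isClosed.isOpen_compl.mem_nhds (fun h => lt_irrefl _ h.2.1)
        obtain ⟨ε, hε, hb⟩ := Metric.mem_nhds_iff.1 hmem
        refine ⟨t + min ε 1, by have := lt_min hε one_pos; linarith,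
          by have := min_le_right ε 1; linarith, fun u hu huJ => ?_⟩
        have h1 := min_le_left ε 1
        have h2 := min_le_right ε 1
        have h3 := hu.1
        have h4 := hu.2
        refine hb (a := u) ?_ ⟨huJ, h3, by linarith⟩
        rw [Metric.mem_ball, Real.dist_eq, abs_lt]
        constructor <;> linarith
      obtain ⟨c, hc, hc1, hcJ⟩ := hnot
      refine ⟨f ((t + c) / 2), fun _ => ⟨c, hc, fun u hu => ?_⟩⟩
      refine aux_const f t c (fun s hs => hfl s (lt_of_le_of_lt ht hs.1) (hcJ s hs)) u hu _ ?_
      constructor <;> linarith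
    · exact ⟨σ 0 0, fun h => (ht h).elim⟩
  choose w hw using hw
  have hwf : ∀ s, 0 < s → s ∉ J → w s = f s := by
    intro s hs0 hsJ
    obtain ⟨ε, hε, he⟩ := hfl s hs0 hsJ
    obtain ⟨c, hc, h⟩ := hw s hs0.le
    obtain ⟨u, hu1, hu2⟩ := exists_between (lt_min hc (show s < s + ε by linarith))
    rw [lt_min_iff] at hu2
    rw [← h u ⟨hu1, hu2.1⟩]
    exact he u (by linarith) hu2.2
  have hwr : ∀ t, 0 ≤ t → ∃ c > t, ∀ u, t ≤ u → u < c → w u = w t := by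
    intro t ht
    obtain ⟨c, hc, h⟩ := hw t ht
    refine ⟨c, hc, fun u hu1 hu2 => ?_⟩
    obtain ⟨c', hc', h'⟩ := hw u (ht.trans hu1)
    obtain ⟨y, hy1, hy2⟩ := exists_between (lt_min hu2 hc')
    rw [lt_min_iff] at hy2
    rw [← h y ⟨by linarith, hy2.1⟩, ← h' y ⟨hy1, hy2.2⟩]
  have hR : RightLocConst (fun t => w (max t 0)) := by
    intro s
    rcases le_or_gt 0 s with h | h
    · obtain ⟨c, hc, hcw⟩ := hwr s h
      refine ⟨c - s, by linarith, fun u hu1 hu2 => ?_⟩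
      simp only []
      rw [max_eq_left h, max_eq_left (h.trans hu1)]
      exact hcw u hu1 (by linarith)
    · refine ⟨-s, by linarith, fun u hu1 hu2 => ?_⟩
      simp only []
      rw [max_eq_right h.le, max_eq_right (by linarith)]
  have hS : SwitchTimes (fun t => w (max t 0)) ⊆ J := by
    intro s hs
    by_contra hsJ
    obtain ⟨hs0, hs1⟩ := hs
    obtain ⟨ε, hε, he⟩ := hfl s hs0 hsJ
    obtain ⟨ε', hε', v, hv⟩ := hloc s hs0 hsJ
    obtain ⟨u, hu1, hu2, hu3⟩ := hs1 (min ε ε') (lt_min hε hε')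
    have := min_le_left ε ε'
    have := min_le_right ε ε'
    obtain ⟨h3, h4, -⟩ := hv u (by linarith) (by linarith)
    apply hu3
    simp only []
    rw [max_eq_left h3.le, max_eq_left hs0.le, hwf u h3 h4, hwf s hs0 hsJ]
    exact he u (by linarith) (by linarith)
  refine ⟨φ, hφ, fun t => w (max t 0), ⟨hR, ?_⟩, ?_⟩
  · intro τ₁ τ₂ h1 h12
    have hfin : (SwitchTimes (fun t => w (max t 0)) ∩ Ioo τ₁ τ₂).Finite :=
      (hJfin τ₁ τ₂ h1 h12).subset (inter_subset_inter_left _ hS)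
    have := hcount τ₁ τ₂ h1 h12 hfin.toFinset (by
      rw [hfin.coe_toFinset]; exact inter_subset_inter_left _ hS)
    rwa [← Set.ncard_eq_toFinset_card _ hfin, ← Nat.card_coe_set_eq] at this
  · refine aux_sum (fun l => σ (φ l)) (fun l => (hσ (φ l)).1) _ hR J hJc ?_
    intro t ht htJ
    rw [max_eq_left ht.le, hwf t ht htJ]
    exact hf t ht htJ
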